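/- arXiv:1605.00035 — 2 statements merged into one kernel-verified Lean document; each statement's English description precedes it below -/
import Mathlib

section
/- Suppose E¹ and E² both maximize Lebesgue measure among minimizers of the perimeter functional P(E, Ω₀) subject to the constraint E \ Ω̄ = L \ Ω̄ (for a fixed set L of finite perimeter and fixed open sets Ω ⊆ Ω₀). Then |E¹ △ E²| = 0, i.e., the maximizer is unique up to a null set. -/
open MeasureTheory Set Filter Metric Bornology
open scoped ENNReal symmDiff RealInnerProductSpace Topology

noncomputable section

/-- Divergence of a vector field on `ℝⁿ`. -/
def divg {n : ℕ} (φ : EuclideanSpace ℝ (Fin n) → EuclideanSpace ℝ (Fin n))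
    (x : EuclideanSpace ℝ (Fin n)) : ℝ :=
  ∑ i, fderiv ℝ φ x (EuclideanSpace.single i 1) i

/-- Admissible test vector fields for the definition of total variation in `Ω`. -/
def Admissible {n : ℕ} (Ω : Set (EuclideanSpace ℝ (Fin n)))
    (φ : EuclideanSpace ℝ (Fin n) → EuclideanSpace ℝ (Fin n)) : Prop :=
  ContDiff ℝ 1 φ ∧ HasCompactSupport φ ∧ tsupport φ ⊆ Ω ∧ ∀ x, ‖φ x‖ ≤ 1

/-- Total variation of the distributional gradient of `u` in `Ω`. -/
def var {n : ℕ} (Ω : Set (EuclideanSpace ℝ (Fin n))) (u : EuclideanSpace ℝ (Fin n) → ℝ) : ℝ≥0∞ :=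
  ⨆ φ ∈ {φ | Admissible Ω φ}, ENNReal.ofReal (∫ x in Ω, u x * divg φ x)

/-- Perimeter of `E` in `Ω` : total variation of the characteristic function of `E`. -/
def perim {n : ℕ} (E Ω : Set (EuclideanSpace ℝ (Fin n))) : ℝ≥0∞ :=
  var Ω (E.indicator 1)


abbrev E2 := EuclideanSpace ℝ (Fin 2)

section Helpers

variable {n : ℕ}


lemma divg_continuous {φ : (EuclideanSpace ℝ (Fin n)) → EuclideanSpace ℝ (Fin n)} (h : ContDiff ℝ 1 φ) : Continuous (divg φ) := by
  unfold divg
  refine continuous_finsetSum _ fun i _ => ?_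
  have h1 : Continuous fun x => fderiv ℝ φ x (EuclideanSpace.single i 1) :=
    (h.continuous_fderiv (by norm_num)).clm_apply continuous_const
  exact (EuclideanSpace.proj i : (EuclideanSpace ℝ (Fin n)) →L[ℝ] ℝ).continuous.comp h1

lemma divg_zero_of_notMem {φ : (EuclideanSpace ℝ (Fin n)) → EuclideanSpace ℝ (Fin n)} {x : EuclideanSpace ℝ (Fin n)} (hx : x ∉ tsupport φ) :
    divg φ x = 0 := by
  unfold divg
  rw [fderiv_of_notMem_tsupport _ hx]
  simp

lemma divg_compact {φ : (EuclideanSpace ℝ (Fin n)) → EuclideanSpace ℝ (Fin n)} (h : HasCompactSupport φ) :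
    HasCompactSupport (divg φ) :=
  HasCompactSupport.intro h fun _ hx => divg_zero_of_notMem hx

lemma divg_integrable {φ : (EuclideanSpace ℝ (Fin n)) → EuclideanSpace ℝ (Fin n)} (h : ContDiff ℝ 1 φ) (hc : HasCompactSupport φ) :
    Integrable (divg φ) :=
  (divg_continuous h).integrable_of_hasCompactSupport (divg_compact hc)

lemma integral_divg {φ : (EuclideanSpace ℝ (Fin n)) → EuclideanSpace ℝ (Fin n)} (h : ContDiff ℝ 1 φ) (hc : HasCompactSupport φ) :
    ∫ x, divg φ x = 0 := by
  have hi : ∀ i : Fin n, Integrable (fun x => fderiv ℝ φ x (EuclideanSpace.single i 1) i) := by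
    intro i
    have h1 : Continuous fun x => fderiv ℝ φ x (EuclideanSpace.single i 1) :=
      (h.continuous_fderiv (by norm_num)).clm_apply continuous_const
    refine Continuous.integrable_of_hasCompactSupport
      ((EuclideanSpace.proj i : (EuclideanSpace ℝ (Fin n)) →L[ℝ] ℝ).continuous.comp h1) ?_
    refine HasCompactSupport.intro hc fun x hx => ?_
    simp [fderiv_of_notMem_tsupport ℝ hx]
  unfold divg
  rw [integral_finsetSum _ fun i _ => hi i]
  refine Finset.sum_eq_zero fun i _ => ?_
  have hd : ∀ x, HasFDerivAt (fun x => φ x i)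
      ((EuclideanSpace.proj i : (EuclideanSpace ℝ (Fin n)) →L[ℝ] ℝ).comp (fderiv ℝ φ x)) x :=
    fun x => (EuclideanSpace.proj i : (EuclideanSpace ℝ (Fin n)) →L[ℝ] ℝ).hasFDerivAt.comp x
      ((h.differentiable (by norm_num)) x).hasFDerivAt
  have hfd : ∀ x v, fderiv ℝ (fun x => φ x i) x v = fderiv ℝ φ x v i := by
    intro x v
    rw [(hd x).fderiv]; rfl
  have key := integral_mul_fderiv_eq_neg_fderiv_mul_of_integrable (μ := (volume : Measure (EuclideanSpace ℝ (Fin n))))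
    (f := fun _ => (1 : ℝ)) (g := fun x => φ x i) (v := EuclideanSpace.single i 1)
    (by simp) (by simpa [hfd] using hi i) (by
      simp only [one_mul]
      refine Continuous.integrable_of_hasCompactSupport
        ((EuclideanSpace.proj i : (EuclideanSpace ℝ (Fin n)) →L[ℝ] ℝ).continuous.comp
          h.continuous) ?_
      refine HasCompactSupport.intro hc fun x hx => ?_
      simp [image_eq_zero_of_notMem_tsupport hx])
    (fun x _ => differentiableAt_const _) (fun x _ => (hd x).differentiableAt)
  simpa [hfd] using key

lemma divg_smul {φ : (EuclideanSpace ℝ (Fin n)) → EuclideanSpace ℝ (Fin n)} {f : (EuclideanSpace ℝ (Fin n)) → ℝ} {x : EuclideanSpace ℝ (Fin n)}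
    (hf : DifferentiableAt ℝ f x) (hφ : DifferentiableAt ℝ φ x) :
    divg (fun y => f y • φ y) x = f x * divg φ x + fderiv ℝ f x (φ x) := by
  unfold divg
  have h1 : fderiv ℝ (fun y => f y • φ y) x = _ := fderiv_fun_smul hf hφ
  rw [h1]
  have h2 : fderiv ℝ f x (φ x) = ∑ i, fderiv ℝ f x (EuclideanSpace.single i 1) * φ x i := by
    conv_lhs => rw [← (EuclideanSpace.basisFun (Fin n) ℝ).sum_repr (φ x)]
    rw [map_sum]
    refine Finset.sum_congr rfl fun i _ => ?_
    simp [mul_comm]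
  rw [h2, Finset.mul_sum, ← Finset.sum_add_distrib]
  refine Finset.sum_congr rfl fun i _ => ?_
  simp

lemma divg_add {φ ψ : (EuclideanSpace ℝ (Fin n)) → EuclideanSpace ℝ (Fin n)} {x : EuclideanSpace ℝ (Fin n)}
    (hφ : DifferentiableAt ℝ φ x) (hψ : DifferentiableAt ℝ ψ x) :
    divg (fun y => φ y + ψ y) x = divg φ x + divg ψ x := by
  unfold divg
  have h1 : fderiv ℝ (fun y => φ y + ψ y) x = _ := fderiv_fun_add hφ hψ
  rw [h1, ← Finset.sum_add_distrib]
  simp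

lemma divg_sub {φ ψ : (EuclideanSpace ℝ (Fin n)) → EuclideanSpace ℝ (Fin n)} {x : EuclideanSpace ℝ (Fin n)}
    (hφ : DifferentiableAt ℝ φ x) (hψ : DifferentiableAt ℝ ψ x) :
    divg (fun y => φ y - ψ y) x = divg φ x - divg ψ x := by
  unfold divg
  have h1 : fderiv ℝ (fun y => φ y - ψ y) x = _ := fderiv_fun_sub hφ hψ
  rw [h1, ← Finset.sum_sub_distrib]
  simp

lemma divg_translate {φ : (EuclideanSpace ℝ (Fin n)) → EuclideanSpace ℝ (Fin n)} (a x : EuclideanSpace ℝ (Fin n)) :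
    divg (fun y => φ (y + a)) x = divg φ (x + a) := by
  unfold divg
  simp [fderiv_comp_add_right]

/-- The smooth identity behind submodularity. -/
lemma smooth_identity {u v : (EuclideanSpace ℝ (Fin n)) → ℝ} (hu : ContDiff ℝ 1 u) (hv : ContDiff ℝ 1 v)
    {φ ψ : (EuclideanSpace ℝ (Fin n)) → EuclideanSpace ℝ (Fin n)} (hφ : ContDiff ℝ 1 φ) (hψ : ContDiff ℝ 1 ψ)
    (hcφ : HasCompactSupport φ) (hcψ : HasCompactSupport ψ)
    {H η : ℝ → ℝ} (hH : ∀ t, HasDerivAt H (η t) t) (hH1 : ContDiff ℝ 1 H)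
    (hη : ContDiff ℝ 1 η) :
    (∫ x, (v x + H (u x - v x)) * divg φ x) + (∫ x, (u x - H (u x - v x)) * divg ψ x)
     = (∫ x, u x * divg (fun y => η (u y - v y) • φ y + (1 - η (u y - v y)) • ψ y) x)
      + ∫ x, v x * divg (fun y => (1 - η (u y - v y)) • φ y + η (u y - v y) • ψ y) x := by
  have hw : ContDiff ℝ 1 (fun y => u y - v y) := hu.sub hv
  have hηw : ContDiff ℝ 1 (fun y => η (u y - v y)) := hη.comp hw
  have hηw' : ContDiff ℝ 1 (fun y => 1 - η (u y - v y)) := contDiff_const.sub hηw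
  have hHw : ContDiff ℝ 1 (fun y => H (u y - v y)) := hH1.comp hw
  have hk : ContDiff ℝ 1 (fun y => H (u y - v y) - η (u y - v y) * (u y - v y)) :=
    hHw.sub (hηw.mul hw)
  have h10 : (1 : WithTop ℕ∞) ≠ 0 := by norm_num
  have int : ∀ {f : (EuclideanSpace ℝ (Fin n)) → ℝ} {χ : (EuclideanSpace ℝ (Fin n)) → EuclideanSpace ℝ (Fin n)}, Continuous f → ContDiff ℝ 1 χ →
      HasCompactSupport χ → Integrable (fun x => f x * divg χ x) := by
    intro f χ hf hχ hc
    exact (hf.mul (divg_continuous hχ)).integrable_of_hasCompactSupport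
      ((divg_compact hc).mul_left)
  have hΦ : ContDiff ℝ 1 (fun y => η (u y - v y) • φ y + (1 - η (u y - v y)) • ψ y) :=
    (hηw.smul hφ).add (hηw'.smul hψ)
  have hΨ : ContDiff ℝ 1 (fun y => (1 - η (u y - v y)) • φ y + η (u y - v y) • ψ y) :=
    (hηw'.smul hφ).add (hηw.smul hψ)
  have hcΦ : HasCompactSupport (fun y => η (u y - v y) • φ y + (1 - η (u y - v y)) • ψ y) :=
    HasCompactSupport.add (hcφ.smul_left (f := fun y => η (u y - v y)))
      (hcψ.smul_left (f := fun y => 1 - η (u y - v y)))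
  have hcΨ : HasCompactSupport (fun y => (1 - η (u y - v y)) • φ y + η (u y - v y) • ψ y) :=
    HasCompactSupport.add (hcφ.smul_left (f := fun y => 1 - η (u y - v y)))
      (hcψ.smul_left (f := fun y => η (u y - v y)))
  have hX : ContDiff ℝ 1 (fun y => (H (u y - v y) - η (u y - v y) * (u y - v y)) • (φ y - ψ y)) :=
    hk.smul (hφ.sub hψ)
  have hcX : HasCompactSupport
      (fun y => (H (u y - v y) - η (u y - v y) * (u y - v y)) • (φ y - ψ y)) :=
    HasCompactSupport.smul_left (f := fun y => H (u y - v y) - η (u y - v y) * (u y - v y))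
      (hcφ.sub hcψ)
  have i1 : Integrable (fun x => (v x + H (u x - v x)) * divg φ x) :=
    int (hv.continuous.add hHw.continuous) hφ hcφ
  have i2 : Integrable (fun x => (u x - H (u x - v x)) * divg ψ x) :=
    int (hu.continuous.sub hHw.continuous) hψ hcψ
  have i3 := int hu.continuous hΦ hcΦ
  have i4 := int hv.continuous hΨ hcΨ
  have e12 := integral_sub (i1.add i2) (i3.add i4)
  simp only [Pi.add_apply] at e12
  rw [← integral_add i1 i2, ← integral_add i3 i4, ← sub_eq_zero,
    ← e12, ← integral_divg hX hcX]
  refine integral_congr_ae (Eventually.of_forall fun x => ?_)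
  have dφ := hφ.differentiable h10 x
  have dψ := hψ.differentiable h10 x
  have dη := hηw.differentiable h10 x
  have dη' := hηw'.differentiable h10 x
  have dw := hw.differentiable h10 x
  have dHw : HasFDerivAt (fun y => H (u y - v y))
      (η (u x - v x) • fderiv ℝ (fun y => u y - v y) x) x :=
    (hH (u x - v x)).comp_hasFDerivAt x dw.hasFDerivAt
  have dk := (dHw.sub (dη.hasFDerivAt.mul dw.hasFDerivAt)).fderiv
  have dk' : fderiv ℝ (fun y => H (u y - v y) - η (u y - v y) * (u y - v y)) x
      = -(u x - v x) • fderiv ℝ (fun y => η (u y - v y)) x := by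
    refine Eq.trans dk ?_
    ext z
    simp
    ring
  have d1 : fderiv ℝ (fun y => 1 - η (u y - v y)) x = - fderiv ℝ (fun y => η (u y - v y)) x :=
    fderiv_const_sub _
  simp only
  rw [divg_add (dη.fun_smul dφ) (dη'.fun_smul dψ), divg_add (dη'.fun_smul dφ) (dη.fun_smul dψ),
    divg_smul dη dφ, divg_smul dη dψ, divg_smul dη' dφ, divg_smul dη' dψ,
    divg_smul (hk.differentiable h10 x) (dφ.fun_sub dψ), divg_sub dφ dψ, dk', d1]
  simp
  ring

/-- Mollification lemma: Fubini and translation. -/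
lemma mollify_le {u : (EuclideanSpace ℝ (Fin n)) → ℝ} (hu : Measurable u) (hub : ∀ x, ‖u x‖ ≤ 1)
    {D : (EuclideanSpace ℝ (Fin n)) → ℝ} (hD : Integrable D) (ρ : ContDiffBump (0 : EuclideanSpace ℝ (Fin n))) {P : ℝ}
    (hP : ∀ a : EuclideanSpace ℝ (Fin n), ‖a‖ < ρ.rOut → ∫ x, u x * D (x + a) ≤ P) :
    ∫ x, (convolution (ρ.normed volume) u (ContinuousLinearMap.lsmul ℝ ℝ) volume) x * D x ≤ P := by
  have e1 : ∀ x, (convolution (ρ.normed volume) u (ContinuousLinearMap.lsmul ℝ ℝ) volume) x * D x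
      = ∫ t, u (x - t) * (D x * ρ.normed volume t) := by
    intro x
    rw [convolution_def, ← integral_mul_const]
    refine integral_congr_ae (Eventually.of_forall fun t => ?_)
    simp
    ring
  simp_rw [e1]
  have hi : Integrable (Function.uncurry fun x t : EuclideanSpace ℝ (Fin n) => u (x - t) * (D x * ρ.normed volume t))
      (volume.prod volume) := by
    refine Integrable.bdd_mul (c := 1) (hD.mul_prod ρ.integrable_normed) ?_ ?_
    · exact (hu.comp (measurable_fst.sub measurable_snd)).aestronglyMeasurable
    · exact Eventually.of_forall fun z => hub _
  rw [integral_integral_swap hi]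
  have hi2 := hi.integral_prod_right
  have e2 : ∀ t, ∫ x, u (x - t) * (D x * ρ.normed volume t)
      = ρ.normed volume t * ∫ x, u x * D (x + t) := by
    intro t
    rw [← integral_add_right_eq_self _ t, ← integral_const_mul]
    refine integral_congr_ae (Eventually.of_forall fun x => ?_)
    simp
    ring
  calc _ ≤ ∫ t, ρ.normed volume t * P := by
        refine integral_mono hi2 (ρ.integrable_normed.mul_const P) fun t => ?_
        simp only
        rw [e2 t]
        by_cases ht : t ∈ Function.support (ρ.normed volume)
        · rw [ρ.support_normed_eq] at ht
          exact mul_le_mul_of_nonneg_left (hP t (by simpa using ht)) (ρ.nonneg_normed t)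
        · rw [Function.notMem_support] at ht
          simp [ht]
    _ = P := by rw [integral_mul_const, ρ.integral_normed, one_mul]

lemma conv_bound {u : (EuclideanSpace ℝ (Fin n)) → ℝ} (hub : ∀ x, ‖u x‖ ≤ 1) (ρ : ContDiffBump (0 : EuclideanSpace ℝ (Fin n))) (x : EuclideanSpace ℝ (Fin n)) :
    ‖(convolution (ρ.normed volume) u (ContinuousLinearMap.lsmul ℝ ℝ) volume) x‖ ≤ 1 := by
  rw [convolution_def, ← ρ.integral_normed (μ := volume)]
  refine norm_integral_le_of_norm_le ρ.integrable_normed (Eventually.of_forall fun t => ?_)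
  simp only [ContinuousLinearMap.lsmul_apply, smul_eq_mul, norm_mul]
  rw [Real.norm_of_nonneg (ρ.nonneg_normed t)]
  exact mul_le_of_le_one_right (ρ.nonneg_normed t) (hub _)

/-- smooth positive part -/
def Hs (δ t : ℝ) : ℝ := (Real.sqrt (t ^ 2 + δ ^ 2) + t) / 2

def es (δ t : ℝ) : ℝ := (t / Real.sqrt (t ^ 2 + δ ^ 2) + 1) / 2

lemma Hs_deriv {δ : ℝ} (hδ : 0 < δ) (t : ℝ) : HasDerivAt (Hs δ) (es δ t) t := by
  have hp : t ^ 2 + δ ^ 2 ≠ 0 := by positivity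
  have h := (((((hasDerivAt_id t).pow 2).add_const (δ ^ 2)).sqrt hp).add (hasDerivAt_id t)).div_const 2
  refine HasDerivAt.congr_deriv h ?_
  simp [es]
  field_simp

lemma Hs_contDiff {δ : ℝ} (hδ : 0 < δ) : ContDiff ℝ 1 (Hs δ) := by
  have : ContDiff ℝ 1 fun t : ℝ => Real.sqrt (t ^ 2 + δ ^ 2) :=
    ContDiff.sqrt (by fun_prop) fun t => by positivity
  exact (this.add contDiff_id).div_const 2

lemma es_contDiff {δ : ℝ} (hδ : 0 < δ) : ContDiff ℝ 1 (es δ) := by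
  have : ContDiff ℝ 1 fun t : ℝ => Real.sqrt (t ^ 2 + δ ^ 2) :=
    ContDiff.sqrt (by fun_prop) fun t => by positivity
  exact ((contDiff_id.div this fun t => by positivity).add contDiff_const).div_const 2

lemma es_mem {δ : ℝ} (hδ : 0 < δ) (t : ℝ) : 0 ≤ es δ t ∧ es δ t ≤ 1 := by
  have hs : 0 < Real.sqrt (t ^ 2 + δ ^ 2) := by positivity
  have h1 : |t| ≤ Real.sqrt (t ^ 2 + δ ^ 2) := Real.abs_le_sqrt (by nlinarith)
  have h2 : |t / Real.sqrt (t ^ 2 + δ ^ 2)| ≤ 1 := by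
    rw [abs_div, abs_of_pos hs]; exact (div_le_one hs).2 h1
  obtain ⟨h3, h4⟩ := abs_le.1 h2
  unfold es
  constructor <;> linarith

lemma Hs_bound {δ t : ℝ} (hδ : 0 < δ) (hδ1 : δ ≤ 1) (ht : |t| ≤ 2) : |Hs δ t| ≤ 3 := by
  have h1 : Real.sqrt (t ^ 2 + δ ^ 2) ≤ 3 := by
    rw [Real.sqrt_le_left (by norm_num)]
    have := sq_abs t
    nlinarith [abs_nonneg t]
  have h0 := Real.sqrt_nonneg (t ^ 2 + δ ^ 2)
  obtain ⟨h3, h4⟩ := abs_le.1 ht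
  unfold Hs
  rw [abs_le]; constructor <;> linarith

lemma Hs_tendsto {δ t : ℕ → ℝ} {s : ℝ} (hδ : Tendsto δ atTop (𝓝 0)) (ht : Tendsto t atTop (𝓝 s)) :
    Tendsto (fun k => Hs (δ k) (t k)) atTop (𝓝 ((|s| + s) / 2)) := by
  have h : Tendsto (fun k => Hs (δ k) (t k)) atTop (𝓝 ((Real.sqrt (s ^ 2 + 0 ^ 2) + s) / 2)) := by
    unfold Hs
    exact (((((ht.pow 2).add (hδ.pow 2)).sqrt).add ht).div_const 2)
  simpa [Real.sqrt_sq_eq_abs] using h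

lemma setIntegral_divg {Ω : Set (EuclideanSpace ℝ (Fin n))} {φ : (EuclideanSpace ℝ (Fin n)) → EuclideanSpace ℝ (Fin n)} (h : tsupport φ ⊆ Ω)
    (u : (EuclideanSpace ℝ (Fin n)) → ℝ) : ∫ x in Ω, u x * divg φ x = ∫ x, u x * divg φ x := by
  refine setIntegral_eq_integral_of_forall_compl_eq_zero fun x hx => ?_
  rw [divg_zero_of_notMem fun h' => hx (h h'), mul_zero]

lemma integral_le_perim {Ω A : Set (EuclideanSpace ℝ (Fin n))} (hA : perim A Ω ≠ ⊤) {φ : (EuclideanSpace ℝ (Fin n)) → EuclideanSpace ℝ (Fin n)}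
    (hφ : Admissible Ω φ) : ∫ x, A.indicator 1 x * divg φ x ≤ (perim A Ω).toReal := by
  rw [← setIntegral_divg hφ.2.2.1]
  rw [← ENNReal.ofReal_le_iff_le_toReal hA]
  exact le_iSup₂ (f := fun (φ : (EuclideanSpace ℝ (Fin n)) → EuclideanSpace ℝ (Fin n)) (_ : φ ∈ {φ | Admissible Ω φ}) =>
    ENNReal.ofReal (∫ x in Ω, A.indicator 1 x * divg φ x)) φ hφ

lemma key_ineq {Ω A B : Set (EuclideanSpace ℝ (Fin n))} (hΩ : IsOpen Ω) (hA : MeasurableSet A) (hB : MeasurableSet B)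
    (hPA : perim A Ω ≠ ⊤) (hPB : perim B Ω ≠ ⊤) {φ ψ : (EuclideanSpace ℝ (Fin n)) → EuclideanSpace ℝ (Fin n)}
    (hφ : Admissible Ω φ) (hψ : Admissible Ω ψ) :
    (∫ x, (A ∪ B).indicator 1 x * divg φ x) + (∫ x, (A ∩ B).indicator 1 x * divg ψ x)
      ≤ (perim A Ω).toReal + (perim B Ω).toReal := by
  obtain ⟨cφ, kφ, sφ, bφ⟩ := hφ
  obtain ⟨cψ, kψ, sψ, bψ⟩ := hψ
  obtain ⟨ε, hε, hthick⟩ := (IsCompact.union kφ kψ).exists_thickening_subset_open hΩ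
    (union_subset sφ sψ)
  -- general facts on combinations
  have hadm : ∀ (θ : (EuclideanSpace ℝ (Fin n)) → ℝ), ContDiff ℝ 1 θ → (∀ x, 0 ≤ θ x ∧ θ x ≤ 1) →
      ∀ a : EuclideanSpace ℝ (Fin n), ‖a‖ < ε →
      Admissible Ω (fun y => θ (y + a) • φ (y + a) + (1 - θ (y + a)) • ψ (y + a)) := by
    intro θ hθ hθ1 a ha
    have hts : tsupport (fun y => θ (y + a) • φ (y + a) + (1 - θ (y + a)) • ψ (y + a)) ⊆
        (fun y => y + a) ⁻¹' (tsupport φ ∪ tsupport ψ) := by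
      refine closure_minimal ?_ (((isClosed_tsupport φ).union (isClosed_tsupport ψ)).preimage
        (continuous_add_const a))
      intro y hy
      by_contra hcon
      simp only [mem_preimage, mem_union, not_or] at hcon
      apply hy
      simp [image_eq_zero_of_notMem_tsupport hcon.1, image_eq_zero_of_notMem_tsupport hcon.2]
    have hcpt : IsCompact ((fun y : EuclideanSpace ℝ (Fin n) => y + a) ⁻¹' (tsupport φ ∪ tsupport ψ)) :=
      (Homeomorph.addRight a).isCompact_preimage.2 (IsCompact.union kφ kψ)
    refine ⟨?_, ?_, ?_, ?_⟩
    · have ht : ContDiff ℝ 1 (fun y : EuclideanSpace ℝ (Fin n) => y + a) := contDiff_id.add contDiff_const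
      exact ((hθ.comp ht).smul (cφ.comp ht)).add
        ((contDiff_const.sub (hθ.comp ht)).smul (cψ.comp ht))
    · exact hcpt.of_isClosed_subset (isClosed_tsupport _) hts
    · intro y hy
      refine hthick (mem_thickening_iff.2 ⟨y + a, hts hy, ?_⟩)
      simpa [dist_eq_norm] using ha
    · intro y
      obtain ⟨h0, h1⟩ := hθ1 (y + a)
      refine (norm_add_le _ _).trans ?_
      rw [norm_smul, norm_smul, Real.norm_of_nonneg h0, Real.norm_of_nonneg (by linarith)]
      nlinarith [bφ (y + a), bψ (y + a)]
  -- the mollifiers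
  let r : ℕ → ℝ := fun k => min 1 ε / (k + 2)
  have hr : ∀ k, 0 < r k := fun k => by positivity
  have hr2 : ∀ k, r k ≤ min 1 ε / 2 := fun k => by
    refine div_le_div_of_nonneg_left (by positivity) (by norm_num) ?_
    have : (0 : ℝ) ≤ k := Nat.cast_nonneg k
    linarith
  have hr1 : ∀ k, r k ≤ 1 := fun k => by
    have := hr2 k
    have := min_le_left 1 ε
    linarith
  have hr0 : Tendsto r atTop (𝓝 0) :=
    tendsto_const_nhds.div_atTop (tendsto_natCast_atTop_atTop.atTop_add tendsto_const_nhds)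
  let ρ : ℕ → ContDiffBump (0 : EuclideanSpace ℝ (Fin n)) := fun k =>
    ⟨r k / 2, r k, by have := hr k; positivity, by have := hr k; linarith⟩
  have hρε : ∀ k, (ρ k).rOut < ε := fun k => by
    show r k < ε
    have := hr2 k
    have := min_le_right 1 ε
    have : 0 < min 1 ε := by positivity
    linarith
  have hρ0 : Tendsto (fun k => (ρ k).rOut) atTop (𝓝 0) := hr0
  have hρ2 : ∀ᶠ k in atTop, (ρ k).rOut ≤ 2 * (ρ k).rIn :=
    Eventually.of_forall fun k => by
      show r k ≤ 2 * (r k / 2)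
      linarith
  have hind : ∀ (S : Set (EuclideanSpace ℝ (Fin n))) x, ‖S.indicator (1 : (EuclideanSpace ℝ (Fin n)) → ℝ) x‖ ≤ 1 := by
    intro S x
    by_cases hx : x ∈ S <;> simp [hx]
  have hmeas : ∀ {S : Set (EuclideanSpace ℝ (Fin n))}, MeasurableSet S → Measurable (S.indicator (1 : (EuclideanSpace ℝ (Fin n)) → ℝ)) :=
    fun hS => measurable_one.indicator hS
  have hloc : ∀ {S : Set (EuclideanSpace ℝ (Fin n))}, MeasurableSet S →
      LocallyIntegrable (S.indicator (1 : (EuclideanSpace ℝ (Fin n)) → ℝ)) := by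
    intro S hS
    have h1 : LocallyIntegrable (1 : (EuclideanSpace ℝ (Fin n)) → ℝ) volume := locallyIntegrable_const (1 : ℝ)
    exact h1.indicator hS
  let c : Set (EuclideanSpace ℝ (Fin n)) → ℕ → (EuclideanSpace ℝ (Fin n)) → ℝ := fun S k =>
    convolution ((ρ k).normed volume) (S.indicator (1 : (EuclideanSpace ℝ (Fin n)) → ℝ))
      (ContinuousLinearMap.lsmul ℝ ℝ) volume
  have hc1 : ∀ {S : Set (EuclideanSpace ℝ (Fin n))}, MeasurableSet S → ∀ k, ContDiff ℝ 1 (c S k) := fun hS k =>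
    (ρ k).hasCompactSupport_normed.contDiff_convolution_left _
      ((ρ k).contDiff_normed (n := 1)) (hloc hS)
  have hcb : ∀ S k x, |c S k x| ≤ 1 := fun S k x => conv_bound (hind S) (ρ k) x
  have hct : ∀ {S : Set (EuclideanSpace ℝ (Fin n))}, MeasurableSet S → ∀ᵐ x, Tendsto (fun k => c S k x) atTop
      (𝓝 (S.indicator 1 x)) := fun hS =>
    ContDiffBump.ae_convolution_tendsto_right_of_locallyIntegrable hρ0 hρ2 (hloc hS)
  -- inequality for each k
  have hk : ∀ k, (∫ x, (c B k x + Hs (r k) (c A k x - c B k x)) * divg φ x)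
      + (∫ x, (c A k x - Hs (r k) (c A k x - c B k x)) * divg ψ x)
      ≤ (perim A Ω).toReal + (perim B Ω).toReal := by
    intro k
    rw [smooth_identity (hc1 hA k) (hc1 hB k) cφ cψ kφ kψ (Hs_deriv (hr k)) (Hs_contDiff (hr k))
      (es_contDiff (hr k))]
    have hθ : ContDiff ℝ 1 (fun x => es (r k) (c A k x - c B k x)) :=
      (es_contDiff (hr k)).comp ((hc1 hA k).sub (hc1 hB k))
    have hθ1 : ∀ x, 0 ≤ es (r k) (c A k x - c B k x) ∧ es (r k) (c A k x - c B k x) ≤ 1 :=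
      fun x => es_mem (hr k) _
    have hθ' : ContDiff ℝ 1 (fun x => 1 - es (r k) (c A k x - c B k x)) :=
      contDiff_const.sub hθ
    have hθ1' : ∀ x, 0 ≤ 1 - es (r k) (c A k x - c B k x) ∧
        1 - es (r k) (c A k x - c B k x) ≤ 1 :=
      fun x => ⟨by linarith [(hθ1 x).2], by linarith [(hθ1 x).1]⟩
    refine add_le_add ?_ ?_
    · have h0 := hadm _ hθ hθ1 0 (by simpa using hε)
      simp only [add_zero] at h0
      refine mollify_le (hmeas hA) (hind A) (divg_integrable h0.1 h0.2.1) (ρ k) fun a ha => ?_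
      have := integral_le_perim hPA (hadm _ hθ hθ1 a (ha.trans (hρε k)))
      refine le_trans (le_of_eq ?_) this
      refine integral_congr_ae (Eventually.of_forall fun x => ?_)
      simp only
      rw [← divg_translate]
    · have h0 := hadm _ hθ' hθ1' 0 (by simpa using hε)
      simp only [add_zero, sub_sub_cancel] at h0
      refine mollify_le (hmeas hB) (hind B) (divg_integrable h0.1 h0.2.1) (ρ k) fun a ha => ?_
      have := integral_le_perim hPB (hadm _ hθ' hθ1' a (ha.trans (hρε k)))
      simp only [sub_sub_cancel] at this
      refine le_trans (le_of_eq ?_) this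
      refine integral_congr_ae (Eventually.of_forall fun x => ?_)
      simp only
      rw [← divg_translate]
  have hHb : ∀ k x, |Hs (r k) (c A k x - c B k x)| ≤ 3 := fun k x => by
    refine Hs_bound (hr k) (hr1 k) ?_
    have := abs_sub (c A k x) (c B k x)
    linarith [hcb A k x, hcb B k x]
  have hHc : ∀ k, Continuous fun x => Hs (r k) (c A k x - c B k x) := fun k =>
    (Hs_contDiff (hr k)).continuous.comp ((hc1 hA k).continuous.sub (hc1 hB k).continuous)
  have lim1 : Tendsto (fun k => ∫ x, (c B k x + Hs (r k) (c A k x - c B k x)) * divg φ x) atTop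
      (𝓝 (∫ x, (A ∪ B).indicator 1 x * divg φ x)) := by
    refine tendsto_integral_of_dominated_convergence (fun x => 4 * ‖divg φ x‖)
      (fun k => (((hc1 hB k).continuous.add (hHc k)).mul
        (divg_continuous cφ)).aestronglyMeasurable)
      ((divg_integrable cφ kφ).norm.const_mul 4) (fun k => Eventually.of_forall fun x => ?_) ?_
    · rw [norm_mul]
      refine mul_le_mul_of_nonneg_right ?_ (norm_nonneg _)
      refine (norm_add_le _ _).trans ?_
      have h1 := hcb B k x
      have h2 := hHb k x
      simp only [Real.norm_eq_abs]
      linarith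
    · filter_upwards [hct hA, hct hB] with x hxA hxB
      refine Tendsto.mul_const _ ?_
      have := hxB.add (Hs_tendsto hr0 (hxA.sub hxB))
      convert this using 2
      by_cases h1 : x ∈ A <;> by_cases h2 : x ∈ B <;> simp [h1, h2]
  have lim2 : Tendsto (fun k => ∫ x, (c A k x - Hs (r k) (c A k x - c B k x)) * divg ψ x) atTop
      (𝓝 (∫ x, (A ∩ B).indicator 1 x * divg ψ x)) := by
    refine tendsto_integral_of_dominated_convergence (fun x => 4 * ‖divg ψ x‖)
      (fun k => (((hc1 hA k).continuous.sub (hHc k)).mul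
        (divg_continuous cψ)).aestronglyMeasurable)
      ((divg_integrable cψ kψ).norm.const_mul 4) (fun k => Eventually.of_forall fun x => ?_) ?_
    · rw [norm_mul]
      refine mul_le_mul_of_nonneg_right ?_ (norm_nonneg _)
      refine (norm_sub_le _ _).trans ?_
      have h1 := hcb A k x
      have h2 := hHb k x
      simp only [Real.norm_eq_abs]
      linarith
    · filter_upwards [hct hA, hct hB] with x hxA hxB
      refine Tendsto.mul_const _ ?_
      have := hxA.sub (Hs_tendsto hr0 (hxA.sub hxB))
      convert this using 2
      by_cases h1 : x ∈ A <;> by_cases h2 : x ∈ B <;> simp [h1, h2]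
  exact le_of_tendsto (lim1.add lim2) (Eventually.of_forall hk)

lemma admissible_zero (Ω : Set (EuclideanSpace ℝ (Fin n))) : Admissible Ω (0 : (EuclideanSpace ℝ (Fin n)) → EuclideanSpace ℝ (Fin n)) :=
  ⟨contDiff_const, HasCompactSupport.zero, by simp [tsupport], by simp⟩

lemma divg_zero : divg (0 : (EuclideanSpace ℝ (Fin n)) → EuclideanSpace ℝ (Fin n)) = 0 := by
  ext x
  simp [divg]

/-- Submodularity of the perimeter. -/
lemma perim_submodular {Ω A B : Set (EuclideanSpace ℝ (Fin n))} (hΩ : IsOpen Ω) (hA : MeasurableSet A)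
    (hB : MeasurableSet B) :
    perim (A ∪ B) Ω + perim (A ∩ B) Ω ≤ perim A Ω + perim B Ω := by
  by_cases hPA : perim A Ω = ⊤
  · simp [hPA]
  by_cases hPB : perim B Ω = ⊤
  · simp [hPB]
  have key := fun {φ ψ : (EuclideanSpace ℝ (Fin n)) → EuclideanSpace ℝ (Fin n)} (hφ : Admissible Ω φ) (hψ : Admissible Ω ψ) =>
    key_ineq hΩ hA hB hPA hPB hφ hψ
  have e : perim A Ω + perim B Ω
      = ENNReal.ofReal ((perim A Ω).toReal + (perim B Ω).toReal) := by
    rw [ENNReal.ofReal_add ENNReal.toReal_nonneg ENNReal.toReal_nonneg,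
      ENNReal.ofReal_toReal hPA, ENNReal.ofReal_toReal hPB]
  rw [e]
  refine ENNReal.biSup_add_biSup_le' ⟨0, admissible_zero Ω⟩ ⟨0, admissible_zero Ω⟩
    fun φ hφ ψ hψ => ?_
  have hφ' : Admissible Ω φ := hφ
  have hψ' : Admissible Ω ψ := hψ
  rw [setIntegral_divg hφ'.2.2.1, setIntegral_divg hψ'.2.2.1]
  have k1 := key hφ' hψ'
  have k2 := key hφ' (admissible_zero Ω)
  have k3 := key (admissible_zero Ω) hψ'
  simp only [divg_zero, Pi.zero_apply, mul_zero, integral_zero, add_zero, zero_add] at k2 k3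
  rcases le_total 0 (∫ x, (A ∪ B).indicator 1 x * divg φ x) with h1 | h1
  · rcases le_total 0 (∫ x, (A ∩ B).indicator 1 x * divg ψ x) with h2 | h2
    · rw [← ENNReal.ofReal_add h1 h2]
      exact ENNReal.ofReal_le_ofReal k1
    · rw [ENNReal.ofReal_of_nonpos h2, add_zero]
      exact ENNReal.ofReal_le_ofReal k2
  · rw [ENNReal.ofReal_of_nonpos h1, zero_add]
    exact ENNReal.ofReal_le_ofReal k3

end Helpers

/-- among the perimeter minimizers (in `Ω₀`, subject to the constraint
`E \ closure Ω = L \ closure Ω`), a minimizer of maximal Lebesgue measure is unique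
up to a null set. -/
theorem max_volume_minimizer_unique
    (Ω Ω₀ : Set E2) (hΩ : IsOpen Ω) (hΩ₀ : IsOpen Ω₀) (hsub : Ω ⊆ Ω₀)
    (hbΩ : IsBounded Ω) (hbΩ₀ : IsBounded Ω₀)
    (L : Set E2) (hL : MeasurableSet L) (hLsub : L ⊆ Ω₀)
    (hLper : perim L (Ω₀ \ closure Ω) ≠ ⊤)
    (Adm : Set (Set E2))
    (hAdm : Adm = {E | MeasurableSet E ∧ E ⊆ Ω₀ ∧ E \ closure Ω = L \ closure Ω})
    (E₁ E₂ : Set E2) (h1A : E₁ ∈ Adm) (h2A : E₂ ∈ Adm)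
    (h1min : ∀ F ∈ Adm, perim E₁ Ω₀ ≤ perim F Ω₀)
    (h2min : ∀ F ∈ Adm, perim E₂ Ω₀ ≤ perim F Ω₀)
    (h1max : ∀ F ∈ Adm, (∀ G ∈ Adm, perim F Ω₀ ≤ perim G Ω₀) → volume F ≤ volume E₁)
    (h2max : ∀ F ∈ Adm, (∀ G ∈ Adm, perim F Ω₀ ≤ perim G Ω₀) → volume F ≤ volume E₂) :
    volume (E₁ ∆ E₂) = 0 := by
  subst hAdm
  obtain ⟨m1, s1, c1⟩ := h1A
  obtain ⟨m2, s2, c2⟩ := h2A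
  have hU : E₁ ∪ E₂ ∈ {E | MeasurableSet E ∧ E ⊆ Ω₀ ∧ E \ closure Ω = L \ closure Ω} :=
    ⟨m1.union m2, union_subset s1 s2, by rw [union_sdiff_distrib, c1, c2, union_self]⟩
  have hI : E₁ ∩ E₂ ∈ {E | MeasurableSet E ∧ E ⊆ Ω₀ ∧ E \ closure Ω = L \ closure Ω} :=
    ⟨m1.inter m2, inter_subset_left.trans s1, by
      rw [← Set.inter_self (L \ closure Ω)]
      nth_rewrite 1 [← c1]
      rw [← c2]
      ext x
      simp only [mem_inter_iff, Set.mem_sdiff]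
      tauto⟩
  have h12 : perim E₁ Ω₀ = perim E₂ Ω₀ :=
    le_antisymm (h1min _ ⟨m2, s2, c2⟩) (h2min _ ⟨m1, s1, c1⟩)
  have hle : perim (E₁ ∪ E₂) Ω₀ ≤ perim E₁ Ω₀ := by
    by_cases ht : perim E₁ Ω₀ = ⊤
    · simp [ht]
    have hs := perim_submodular hΩ₀ m1 m2
    rw [← h12] at hs
    have h3 : perim (E₁ ∪ E₂) Ω₀ + perim E₁ Ω₀ ≤ perim E₁ Ω₀ + perim E₁ Ω₀ :=
      (add_le_add le_rfl (h1min _ hI)).trans hs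
    exact (ENNReal.add_le_add_iff_right ht).1 h3
  have hUmin : ∀ G ∈ {E | MeasurableSet E ∧ E ⊆ Ω₀ ∧ E \ closure Ω = L \ closure Ω},
      perim (E₁ ∪ E₂) Ω₀ ≤ perim G Ω₀ := fun G hG => hle.trans (h1min G hG)
  have v1 := h1max _ hU hUmin
  have v2 := h2max _ hU hUmin
  have f1 : volume E₁ ≠ ⊤ := ((measure_mono s1).trans_lt hbΩ₀.measure_lt_top).ne
  have f2 : volume E₂ ≠ ⊤ := ((measure_mono s2).trans_lt hbΩ₀.measure_lt_top).ne
  have d1 : volume ((E₁ ∪ E₂) \ E₁) = 0 := by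
    rw [measure_sdiff subset_union_left m1.nullMeasurableSet f1]
    exact tsub_eq_zero_of_le v1
  have d2 : volume ((E₁ ∪ E₂) \ E₂) = 0 := by
    rw [measure_sdiff subset_union_right m2.nullMeasurableSet f2]
    exact tsub_eq_zero_of_le v2
  rw [union_sdiff_left] at d1
  rw [union_sdiff_right] at d2
  rw [Set.symmDiff_def]
  exact measure_union_null d2 d1
end
end

section
/- In the setting of the rectangle foliation by segments ℓ^t (level segments), the function w : Ω → ℝ defined by w(x) = t if x ∈ ℓ^t is continuous on Ω; moreover it satisfies the modulus-of-continuity estimate |w(x₁) − w(x₂)| ≤ ω(c₁|x₁−x₂| + c₂√|x₁−x₂|) for all x₁, x₂ ∈ Ω, where ω is the modulus of continuity of f and c₁, c₂ depend only on Ω. -/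
open MeasureTheory Set Filter Metric Bornology
open scoped ENNReal symmDiff Topology

noncomputable section

theorem sep_aux (L h α β c1 c2 u1 v1 u2 v2 r1 s1 r2 s2 a1 a2 b1 b2 d n : ℝ)
    (ha1 : 0 ≤ a1) (hb1 : 0 ≤ b1) (hab1 : a1 + b1 = 1)
    (ha2 : 0 ≤ a2) (hb2 : 0 ≤ b2) (hab2 : a2 + b2 = 1)
    (hX : |(a2 * u2 + b2 * r2) - (a1 * u1 + b1 * r1)| ≤ d)
    (hY : |(a2 * v2 + b2 * s2) - (a1 * v1 + b1 * s1)| ≤ d)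
    (hα : |α| ≤ 2 * h) (hβ : |β| ≤ 2 * L)
    (h1 : α * u1 + β * v1 ≤ c1) (h2 : α * r1 + β * s1 ≤ c1)
    (h3 : c2 ≤ α * u2 + β * v2) (h4 : c2 ≤ α * r2 + β * s2)
    (hn : n ≤ c2 - c1) : n ≤ 2 * (L + h) * d := by
  have e1 : α * (a1 * u1 + b1 * r1) + β * (a1 * v1 + b1 * s1) ≤ c1 := by
    calc _ = a1 * (α * u1 + β * v1) + b1 * (α * r1 + β * s1) := by ring
      _ ≤ a1 * c1 + b1 * c1 := by gcongr
      _ = c1 := by rw [← add_mul, hab1, one_mul]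
  have e2 : c2 ≤ α * (a2 * u2 + b2 * r2) + β * (a2 * v2 + b2 * s2) := by
    calc c2 = a2 * c2 + b2 * c2 := by rw [← add_mul, hab2, one_mul]
      _ ≤ a2 * (α * u2 + β * v2) + b2 * (α * r2 + β * s2) := by gcongr
      _ = _ := by ring
  set X := (a2 * u2 + b2 * r2) - (a1 * u1 + b1 * r1) with hXd
  set Y := (a2 * v2 + b2 * s2) - (a1 * v1 + b1 * s1) with hYd
  have e3 : n ≤ α * X + β * Y := by
    rw [hXd, hYd]; linarith
  have e4 : α * X ≤ 2 * h * d := by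
    calc α * X ≤ |α * X| := le_abs_self _
      _ = |α| * |X| := abs_mul _ _
      _ ≤ 2 * h * d := by gcongr; exact (abs_nonneg _).trans hα
  have e5 : β * Y ≤ 2 * L * d := by
    calc β * Y ≤ |β * Y| := le_abs_self _
      _ = |β| * |Y| := abs_mul _ _
      _ ≤ 2 * L * d := by gcongr; exact (abs_nonneg _).trans hβ
  linarith

theorem geo_aux (L h u1 v1 u2 v2 r1 s1 r2 s2 a1 a2 b1 b2 d n : ℝ)
    (hL : 0 < L) (hh : 0 < h)
    (ha1 : 0 ≤ a1) (hb1 : 0 ≤ b1) (hab1 : a1 + b1 = 1)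
    (ha2 : 0 ≤ a2) (hb2 : 0 ≤ b2) (hab2 : a2 + b2 = 1)
    (hX : |(a2 * u2 + b2 * r2) - (a1 * u1 + b1 * r1)| ≤ d)
    (hY : |(a2 * v2 + b2 * s2) - (a1 * v1 + b1 * s1)| ≤ d)
    (hp1 : (v1 = h ∧ |u1| ≤ L) ∨ (u1 = -L ∧ |v1| ≤ h))
    (hp2 : (v2 = h ∧ |u2| ≤ L) ∨ (u2 = -L ∧ |v2| ≤ h))
    (hq1 : (s1 = -h ∧ |r1| ≤ L) ∨ (r1 = L ∧ |s1| ≤ h))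
    (hq2 : (s2 = -h ∧ |r2| ≤ L) ∨ (r2 = L ∧ |s2| ≤ h))
    (hp : u1 + v1 < u2 + v2) (hq : r1 + s1 < r2 + s2)
    (hn0 : 0 ≤ n) (hnL : n ≤ L) (hnh : n ≤ h)
    (hnp : n ≤ (u2 - u1) + (v2 - v1)) (hnq : n ≤ (r2 - r1) + (s2 - s1)) :
    n * n ≤ 2 * (L + h) * d := by
  have H := fun α β c1 c2 => sep_aux L h α β c1 c2 u1 v1 u2 v2 r1 s1 r2 s2 a1 a2 b1 b2 d (n * n)
    ha1 hb1 hab1 ha2 hb2 hab2 hX hY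
  have bnd : |u1| ≤ L ∧ |v1| ≤ h ∧ |u2| ≤ L ∧ |v2| ≤ h ∧ |r1| ≤ L ∧ |s1| ≤ h ∧ |r2| ≤ L ∧ |s2| ≤ h := by
    have a1 : |h| ≤ h := (abs_of_pos hh).le
    have a2 : |L| ≤ L := (abs_of_pos hL).le
    have a3 : |-h| ≤ h := by rw [abs_neg]; exact a1
    have a4 : |-L| ≤ L := by rw [abs_neg]; exact a2
    refine ⟨?_, ?_, ?_, ?_, ?_, ?_, ?_, ?_⟩
    · rcases hp1 with ⟨e, k⟩ | ⟨e, k⟩ <;> simp only [e, k, a1, a2, a3, a4]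
    · rcases hp1 with ⟨e, k⟩ | ⟨e, k⟩ <;> simp only [e, k, a1, a2, a3, a4]
    · rcases hp2 with ⟨e, k⟩ | ⟨e, k⟩ <;> simp only [e, k, a1, a2, a3, a4]
    · rcases hp2 with ⟨e, k⟩ | ⟨e, k⟩ <;> simp only [e, k, a1, a2, a3, a4]
    · rcases hq1 with ⟨e, k⟩ | ⟨e, k⟩ <;> simp only [e, k, a1, a2, a3, a4]
    · rcases hq1 with ⟨e, k⟩ | ⟨e, k⟩ <;> simp only [e, k, a1, a2, a3, a4]
    · rcases hq2 with ⟨e, k⟩ | ⟨e, k⟩ <;> simp only [e, k, a1, a2, a3, a4]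
    · rcases hq2 with ⟨e, k⟩ | ⟨e, k⟩ <;> simp only [e, k, a1, a2, a3, a4]
  simp only [abs_le] at bnd
  obtain ⟨⟨bu1, bu1'⟩, ⟨bv1, bv1'⟩, ⟨bu2, bu2'⟩, ⟨bv2, bv2'⟩, ⟨br1, br1'⟩, ⟨bs1, bs1'⟩,
    ⟨br2, br2'⟩, ⟨bs2, bs2'⟩⟩ := bnd
  have L2 : n * n ≤ (v2 - s2) * (u2 - u1) + (r2 - u2) * (v2 - v1) →
      n * n ≤ (v2 - s2) * (r2 - r1) + (r2 - u2) * (s2 - s1) → n * n ≤ 2 * (L + h) * d := by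
    intro k1 k2
    refine H (v2 - s2) (r2 - u2) ((v2 - s2) * u2 + (r2 - u2) * v2 - n * n)
      ((v2 - s2) * u2 + (r2 - u2) * v2) ?_ ?_ ?_ ?_ ?_ ?_ ?_
    · rw [abs_le]; constructor <;> linarith
    · rw [abs_le]; constructor <;> linarith
    all_goals linarith
  have L1 : n * n ≤ (v1 - s1) * (u2 - u1) + (r1 - u1) * (v2 - v1) →
      n * n ≤ (v1 - s1) * (r2 - r1) + (r1 - u1) * (s2 - s1) → n * n ≤ 2 * (L + h) * d := by
    intro k1 k2
    refine H (v1 - s1) (r1 - u1) ((v1 - s1) * u1 + (r1 - u1) * v1)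
      ((v1 - s1) * u1 + (r1 - u1) * v1 + n * n) ?_ ?_ ?_ ?_ ?_ ?_ ?_
    · rw [abs_le]; constructor <;> linarith
    · rw [abs_le]; constructor <;> linarith
    all_goals linarith
  have P : ∀ A B : ℝ, n ≤ A → n ≤ B → n * n ≤ A * B := fun A B hA hB =>
    mul_le_mul hA hB hn0 (hn0.trans hA)
  have S : ∀ A B x y : ℝ, n ≤ A → n ≤ B → 0 ≤ x → 0 ≤ y → n ≤ x + y → n * n ≤ A * x + B * y := by
    intro A B x y hA hB hx hy hxy
    nlinarith [mul_nonneg (sub_nonneg.2 hA) hx, mul_nonneg (sub_nonneg.2 hB) hy,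
      mul_nonneg hn0 (sub_nonneg.2 hxy)]
  have Q : ∀ A R x y : ℝ, n ≤ A → n ≤ R → 0 ≤ x → x ≤ 2 * R → 0 ≤ y → n ≤ x + y →
      n * n ≤ A * x + (2 * R - x) * y := by
    intro A R x y hA hR hx hx2 hy hxy
    rcases le_total x R with hxR | hxR
    · exact S A (2 * R - x) x y hA (by linarith) hx hy hxy
    · have := P A x hA (by linarith)
      have := mul_nonneg (sub_nonneg.2 hx2) hy
      linarith
  rcases hp1 with ⟨ep1, -⟩ | ⟨ep1, -⟩ <;> rcases hp2 with ⟨ep2, -⟩ | ⟨ep2, -⟩ <;>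
    rcases hq1 with ⟨eq1, -⟩ | ⟨eq1, -⟩ <;> rcases hq2 with ⟨eq2, -⟩ | ⟨eq2, -⟩
  all_goals first
    | (exfalso; linarith)
    | simp only [ep1, ep2, eq1, eq2] at *
  · have k1 := P (2 * h) (u2 - u1) (by linarith) (by linarith)
    have k2 := P (2 * h) (r2 - r1) (by linarith) (by linarith)
    exact L2 (by linarith) (by linarith)
  · have k1 := P (2 * h) (u2 - u1) (by linarith) (by linarith)
    have k2 := Q (L - u1) h (s2 + h) (L - r1) (by linarith) (by linarith) (by linarith)
      (by linarith) (by linarith) (by linarith)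
    exact L1 (by linarith) (by linarith)
  · have k1 := P (h - s1) (u2 - u1) (by linarith) (by linarith)
    have k2 := P (L - u1) (s2 - s1) (by linarith) (by linarith)
    exact L1 (by linarith) (by linarith)
  · have k1 := Q (r2 + L) h (h - v1) (u2 + L) (by linarith) (by linarith) (by linarith)
      (by linarith) (by linarith) (by linarith)
    have k2 := P (2 * h) (r2 - r1) (by linarith) (by linarith)
    exact L2 (by linarith) (by linarith)
  · have D : ∀ c1 c2 : ℝ, -(L * (h - v1)) ≤ c1 → -(h * (L - r1)) ≤ c1 →
        c2 ≤ h * (u2 + L) → c2 ≤ L * (s2 + h) → n * n ≤ c2 - c1 →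
        n * n ≤ 2 * (L + h) * d := by
      intro c1 c2 k1 k2 k3 k4 k5
      refine H h L c1 c2 ?_ ?_ ?_ ?_ ?_ ?_ k5
      · rw [abs_of_pos hh]; linarith
      · rw [abs_of_pos hL]; linarith
      all_goals linarith
    have hLh := P L h hnL hnh
    have nn : ∀ x y : ℝ, 0 ≤ x → 0 ≤ y → 0 ≤ x * y := fun _ _ => mul_nonneg
    have Ppos := nn L (h - v1) hL.le (by linarith)
    have Pr := nn h (L - r1) hh.le (by linarith)
    have Pu := nn h (u2 + L) hh.le (by linarith)
    have Ps := nn L (s2 + h) hL.le (by linarith)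
    rcases le_total (L * (h - v1)) (h * (L - r1)) with hA | hA <;>
      rcases le_total (h * (u2 + L)) (L * (s2 + h)) with hB | hB
    · refine D (-(L * (h - v1))) (h * (u2 + L)) le_rfl (by linarith) le_rfl (by linarith) ?_
      have := S L h (h - v1) (u2 + L) hnL hnh (by linarith) (by linarith) (by linarith)
      linarith
    · rcases le_total v1 0 with hv | hv
      · refine D (-(L * (h - v1))) (L * (s2 + h)) le_rfl (by linarith) (by linarith) (by linarith) ?_
        have := P L (h - v1) hnL (by linarith)
        linarith
      rcases le_total 0 s2 with hs | hs
      · refine D (-(L * (h - v1))) (L * (s2 + h)) le_rfl (by linarith) (by linarith) (by linarith) ?_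
        have := P L (s2 + h) hnL (by linarith)
        linarith
      rcases le_total u2 0 with hu | hu
      · have k1 := S (L - u2) (h - s2) (h - v1) (u2 + L) (by linarith) (by linarith)
          (by linarith) (by linarith) (by linarith)
        have k2 := S (h - s2) (L - u2) (L - r1) (s2 + h) (by linarith) (by linarith)
          (by linarith) (by linarith) (by linarith)
        exact L2 (by linarith) (by linarith)
      · have k1 := P (v1 + h) (u2 + L) (by linarith) (by linarith)
        have k1' := nn (r1 + L) (h - v1) (by linarith) (by linarith)
        have k2 := Q (v1 + h) L (L - r1) (s2 + h) (by linarith) (by linarith) (by linarith)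
          (by linarith) (by linarith) (by linarith)
        exact L1 (by linarith) (by linarith)
    · rcases le_total r1 0 with hv | hv
      · refine D (-(h * (L - r1))) (h * (u2 + L)) (by linarith) le_rfl (by linarith) (by linarith) ?_
        have := P h (L - r1) hnh (by linarith)
        linarith
      rcases le_total 0 u2 with hs | hs
      · refine D (-(h * (L - r1))) (h * (u2 + L)) (by linarith) le_rfl (by linarith) (by linarith) ?_
        have := P h (u2 + L) hnh (by linarith)
        linarith
      rcases le_total s2 0 with hu | hu
      · have k1 := S (L - u2) (h - s2) (h - v1) (u2 + L) (by linarith) (by linarith)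
          (by linarith) (by linarith) (by linarith)
        have k2 := S (h - s2) (L - u2) (L - r1) (s2 + h) (by linarith) (by linarith)
          (by linarith) (by linarith) (by linarith)
        exact L2 (by linarith) (by linarith)
      · have k1 := P (r1 + L) (s2 + h) (by linarith) (by linarith)
        have k1' := nn (v1 + h) (L - r1) (by linarith) (by linarith)
        have k2 := Q (r1 + L) h (h - v1) (u2 + L) (by linarith) (by linarith) (by linarith)
          (by linarith) (by linarith) (by linarith)
        exact L1 (by linarith) (by linarith)
    · refine D (-(h * (L - r1))) (L * (s2 + h)) (by linarith) le_rfl (by linarith) le_rfl ?_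
      have := S h L (L - r1) (s2 + h) hnh hnL (by linarith) (by linarith) (by linarith)
      linarith
  · have k1 := Q (h - s1) L (u2 + L) (h - v1) (by linarith) (by linarith) (by linarith)
      (by linarith) (by linarith) (by linarith)
    have k2 := P (2 * L) (s2 - s1) (by linarith) (by linarith)
    exact L1 (by linarith) (by linarith)
  · have k1 := P (r2 + L) (v2 - v1) (by linarith) (by linarith)
    have k2 := P (v2 + h) (r2 - r1) (by linarith) (by linarith)
    exact L2 (by linarith) (by linarith)
  · have k1 := P (2 * L) (v2 - v1) (by linarith) (by linarith)
    have k2 := Q (v2 + h) L (L - r1) (s2 + h) (by linarith) (by linarith) (by linarith)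
      (by linarith) (by linarith) (by linarith)
    exact L2 (by linarith) (by linarith)
  · have k1 := P (2 * L) (v2 - v1) (by linarith) (by linarith)
    have k2 := P (2 * L) (s2 - s1) (by linarith) (by linarith)
    exact L2 (by linarith) (by linarith)

def G1 (L h : ℝ) : Set E2 := {p : E2 | (p 1 = h ∧ |p 0| ≤ L) ∨ (p 0 = -L ∧ |p 1| ≤ h)}
def G2 (L h : ℝ) : Set E2 := {p : E2 | (p 1 = -h ∧ |p 0| ≤ L) ∨ (p 0 = L ∧ |p 1| ≤ h)}

theorem G1_le {L h : ℝ} {p q : E2} (hp : p ∈ G1 L h) (hq : q ∈ G1 L h)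
    (H : p 0 + p 1 ≤ q 0 + q 1) : p 0 ≤ q 0 ∧ p 1 ≤ q 1 := by
  simp only [G1, mem_setOf_eq, abs_le] at hp hq
  rcases hp with ⟨e, k⟩ | ⟨e, k⟩ <;> rcases hq with ⟨e', k'⟩ | ⟨e', k'⟩ <;>
    constructor <;> linarith [k.1, k.2, k'.1, k'.2]

theorem G2_le {L h : ℝ} {p q : E2} (hp : p ∈ G2 L h) (hq : q ∈ G2 L h)
    (H : p 0 + p 1 ≤ q 0 + q 1) : p 0 ≤ q 0 ∧ p 1 ≤ q 1 := by
  simp only [G2, mem_setOf_eq, abs_le] at hp hq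
  rcases hp with ⟨e, k⟩ | ⟨e, k⟩ <;> rcases hq with ⟨e', k'⟩ | ⟨e', k'⟩ <;>
    constructor <;> linarith [k.1, k.2, k'.1, k'.2]

theorem E2_ext {p q : E2} (h0 : p 0 = q 0) (h1 : p 1 = q 1) : p = q := by
  ext i; fin_cases i <;> assumption

theorem dist_le_l1 (p q : E2) : dist p q ≤ |q 0 - p 0| + |q 1 - p 1| := by
  rw [EuclideanSpace.dist_eq, Fin.sum_univ_two, Real.dist_eq, Real.dist_eq]
  apply Real.sqrt_le_iff.2
  rw [abs_sub_comm (p 0), abs_sub_comm (p 1)]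
  have := abs_nonneg (q 0 - p 0)
  have := abs_nonneg (q 1 - p 1)
  constructor
  · positivity
  · nlinarith

theorem coord_le_dist (p q : E2) (i : Fin 2) : |q i - p i| ≤ dist p q := by
  rw [dist_comm, dist_eq_norm]
  simpa using PiLp.norm_apply_le (q - p) i

/-- The geometric estimate for ordered segments. -/
theorem geo_main {L h : ℝ} (hL : 0 < L) (hh : 0 < h) {p1 p2 q1 q2 x1 x2 : E2}
    (hp1 : p1 ∈ G1 L h) (hp2 : p2 ∈ G1 L h) (hq1 : q1 ∈ G2 L h) (hq2 : q2 ∈ G2 L h)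
    (hp : p1 0 + p1 1 < p2 0 + p2 1) (hq : q1 0 + q1 1 < q2 0 + q2 1)
    (hx1 : x1 ∈ segment ℝ p1 q1) (hx2 : x2 ∈ segment ℝ p2 q2) :
    min (dist p1 p2) (dist q1 q2) ≤
      2 * (L + h) / min L h * Real.sqrt (2 * (L + h)) * Real.sqrt (dist x1 x2) := by
  obtain ⟨a1, b1, ha1, hb1, hab1, rfl⟩ := hx1
  obtain ⟨a2, b2, ha2, hb2, hab2, rfl⟩ := hx2
  set d := dist (a1 • p1 + b1 • q1) (a2 • p2 + b2 • q2) with hd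
  have hX := coord_le_dist (a1 • p1 + b1 • q1) (a2 • p2 + b2 • q2) 0
  have hY := coord_le_dist (a1 • p1 + b1 • q1) (a2 • p2 + b2 • q2) 1
  simp only [PiLp.add_apply, PiLp.smul_apply, smul_eq_mul, ← hd] at hX hY
  obtain ⟨op0, op1⟩ := G1_le hp1 hp2 hp.le
  obtain ⟨oq0, oq1⟩ := G2_le hq1 hq2 hq.le
  have dp := dist_le_l1 p1 p2
  have dq := dist_le_l1 q1 q2
  rw [abs_of_nonneg (sub_nonneg.2 op0), abs_of_nonneg (sub_nonneg.2 op1)] at dp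
  rw [abs_of_nonneg (sub_nonneg.2 oq0), abs_of_nonneg (sub_nonneg.2 oq1)] at dq
  set δ := min (dist p1 p2) (dist q1 q2) with hδ
  have hδ0 : 0 ≤ δ := le_min dist_nonneg dist_nonneg
  have hδp : δ ≤ (p2 0 - p1 0) + (p2 1 - p1 1) := (min_le_left _ _).trans dp
  have hδq : δ ≤ (q2 0 - q1 0) + (q2 1 - q1 1) := (min_le_right _ _).trans dq
  have hδK : δ ≤ 2 * (L + h) := by
    have hp1' := hp1
    have hp2' := hp2
    simp only [G1, mem_setOf_eq, abs_le] at hp1' hp2'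
    rcases hp1' with ⟨e, k⟩ | ⟨e, k⟩ <;> rcases hp2' with ⟨e', k'⟩ | ⟨e', k'⟩ <;>
      linarith [k.1, k.2, k'.1, k'.2]
  set m := min L h with hm
  have hm0 : 0 < m := lt_min hL hh
  have hmL : m ≤ L := min_le_left _ _
  have hmh : m ≤ h := min_le_right _ _
  have hK : 0 < 2 * (L + h) := by linarith
  set n := m / (2 * (L + h)) * δ with hn
  have hn0 : 0 ≤ n := by positivity
  have hnm : n ≤ m := by
    rw [hn, div_mul_eq_mul_div, div_le_iff₀ hK]; gcongr
  have hnδ : n ≤ δ := by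
    rw [hn]; apply mul_le_of_le_one_left hδ0
    rw [div_le_one hK]; linarith
  have key := geo_aux L h (p1 0) (p1 1) (p2 0) (p2 1) (q1 0) (q1 1) (q2 0) (q2 1) a1 a2 b1 b2 d n
    hL hh ha1 hb1 hab1 ha2 hb2 hab2 hX hY hp1 hp2 hq1 hq2 hp hq hn0 (hnm.trans hmL)
    (hnm.trans hmh) (hnδ.trans hδp) (hnδ.trans hδq)
  have key2 : n ≤ Real.sqrt (2 * (L + h)) * Real.sqrt d := by
    rw [← Real.sqrt_mul hK.le]
    apply Real.le_sqrt_of_sq_le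
    rw [sq]; exact key
  calc δ = 2 * (L + h) / m * n := by rw [hn]; field_simp
    _ ≤ 2 * (L + h) / m * (Real.sqrt (2 * (L + h)) * Real.sqrt d) := by gcongr
    _ = _ := by ring

theorem order_aux {γ : ℝ → E2} {T : ℝ} (hT : 0 < T) (hc : ContinuousOn γ (Icc 0 T))
    (hi : InjOn γ (Icc 0 T)) {Γ : Set E2} (hΓ : γ '' Icc 0 T = Γ)
    (hs : ∀ p ∈ Γ, ∀ q ∈ Γ, p 0 + p 1 ≤ q 0 + q 1 → p 0 ≤ q 0 ∧ p 1 ≤ q 1)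
    (f : E2 → ℝ) (hf : StrictMonoOn (f ∘ γ) (Icc 0 T)) :
    ((γ 0 0 + γ 0 1 < γ T 0 + γ T 1) ∧
      ∀ p ∈ Γ, ∀ q ∈ Γ, f p < f q → p 0 + p 1 < q 0 + q 1) ∨
    ((γ T 0 + γ T 1 < γ 0 0 + γ 0 1) ∧
      ∀ p ∈ Γ, ∀ q ∈ Γ, f p < f q → q 0 + q 1 < p 0 + p 1) := by
  have hcs : ContinuousOn (fun t => γ t 0 + γ t 1) (Icc 0 T) := by fun_prop
  have his : InjOn (fun t => γ t 0 + γ t 1) (Icc 0 T) := by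
    intro a ha b hb hab
    have ma : γ a ∈ Γ := hΓ ▸ mem_image_of_mem γ ha
    have mb : γ b ∈ Γ := hΓ ▸ mem_image_of_mem γ hb
    have h1 := hs _ ma _ mb (le_of_eq hab)
    have h2 := hs _ mb _ ma (ge_of_eq hab)
    exact hi ha hb (E2_ext (le_antisymm h1.1 h2.1) (le_antisymm h1.2 h2.2))
  have h0 : (0 : ℝ) ∈ Icc 0 T := ⟨le_rfl, hT.le⟩
  have h1 : T ∈ Icc 0 T := ⟨hT.le, le_rfl⟩
  rcases hcs.strictMonoOn_of_injOn_Icc' hT.le his with hm | hm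
  · refine Or.inl ⟨hm h0 h1 hT, ?_⟩
    subst hΓ
    rintro _ ⟨a, ha, rfl⟩ _ ⟨b, hb, rfl⟩ hab
    exact hm ha hb ((hf.lt_iff_lt ha hb).1 hab)
  · refine Or.inr ⟨hm h0 h1 hT, ?_⟩
    subst hΓ
    rintro _ ⟨a, ha, rfl⟩ _ ⟨b, hb, rfl⟩ hab
    exact hm ha hb ((hf.lt_iff_lt ha hb).1 hab)

/-- on the rectangle `Ω = (-L,L) × (-h,h)` foliated by the level segments
`ℓᵗ` of the boundary datum `f` (continuous with modulus of continuity `ω`, strictly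
monotone along `Γ₁` and `Γ₂`), the function `w` defined by `w(z) = t` for `z ∈ ℓᵗ`
satisfies `|w x₁ - w x₂| ≤ ω (c₁ |x₁ - x₂| + c₂ √|x₁ - x₂|)` with constants `c₁, c₂ > 0`
depending only on `Ω`; in particular `w` is continuous on `Ω`. -/
theorem foliation_function_continuous
    (L h : ℝ) (hL : 0 < L) (hh : 0 < h)
    (Ω : Set E2) (hΩ : Ω = {p : E2 | |p 0| < L ∧ |p 1| < h})
    (Γ₁ Γ₂ : Set E2)
    (hΓ₁ : Γ₁ = {p : E2 | (p 1 = h ∧ |p 0| ≤ L) ∨ (p 0 = -L ∧ |p 1| ≤ h)})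
    (hΓ₂ : Γ₂ = {p : E2 | (p 1 = -h ∧ |p 0| ≤ L) ∨ (p 0 = L ∧ |p 1| ≤ h)}) :
    ∃ c₁ c₂ : ℝ, 0 < c₁ ∧ 0 < c₂ ∧
      ∀ (f : E2 → ℝ) (ω : ℝ → ℝ) (T₁ T₂ : ℝ) (γ₁ γ₂ : ℝ → E2) (w : E2 → ℝ),
        ContinuousOn f (Γ₁ ∪ Γ₂) →
        ω 0 = 0 → Monotone ω → ContinuousAt ω 0 →
        (∀ p ∈ Γ₁ ∪ Γ₂, ∀ q ∈ Γ₁ ∪ Γ₂, |f p - f q| ≤ ω (dist p q)) →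
        0 < T₁ → 0 < T₂ →
        ContinuousOn γ₁ (Icc 0 T₁) → ContinuousOn γ₂ (Icc 0 T₂) →
        InjOn γ₁ (Icc 0 T₁) → InjOn γ₂ (Icc 0 T₂) →
        γ₁ '' Icc 0 T₁ = Γ₁ → γ₂ '' Icc 0 T₂ = Γ₂ →
        γ₁ 0 = γ₂ 0 → γ₁ T₁ = γ₂ T₂ →
        StrictMonoOn (f ∘ γ₁) (Icc 0 T₁) → StrictMonoOn (f ∘ γ₂) (Icc 0 T₂) →
        (∀ z ∈ Ω, ∃ p ∈ Γ₁, ∃ q ∈ Γ₂, f p = w z ∧ f q = w z ∧ z ∈ segment ℝ p q) →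
        (∀ x₁ ∈ Ω, ∀ x₂ ∈ Ω,
          |w x₁ - w x₂| ≤ ω (c₁ * dist x₁ x₂ + c₂ * Real.sqrt (dist x₁ x₂))) ∧
        ContinuousOn w Ω := by
  have hm0 : 0 < min L h := lt_min hL hh
  set C := 2 * (L + h) / min L h * Real.sqrt (2 * (L + h)) with hC
  have hC0 : 0 < C := by positivity
  refine ⟨1, C, one_pos, hC0, ?_⟩
  intro f ω T₁ T₂ γ₁ γ₂ w hfc hω0 hωm hωc hfω hT₁ hT₂ hγ₁ hγ₂ hi₁ hi₂ him₁ him₂ h0 hT hm₁ hm₂ hw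
  have hΓ₁' : Γ₁ = G1 L h := hΓ₁
  have hΓ₂' : Γ₂ = G2 L h := hΓ₂
  have o₁ := order_aux hT₁ hγ₁ hi₁ him₁
    (fun p hp q hq H => G1_le (hΓ₁' ▸ hp) (hΓ₁' ▸ hq) H) f hm₁
  have o₂ := order_aux hT₂ hγ₂ hi₂ him₂
    (fun p hp q hq H => G2_le (hΓ₂' ▸ hp) (hΓ₂' ▸ hq) H) f hm₂
  rw [← h0, ← hT] at o₂
  have main : ∀ x₁ ∈ Ω, ∀ x₂ ∈ Ω, w x₁ < w x₂ →
      |w x₁ - w x₂| ≤ ω (1 * dist x₁ x₂ + C * Real.sqrt (dist x₁ x₂)) := by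
    intro x₁ hx₁ x₂ hx₂ hlt
    obtain ⟨p1, hp1, q1, hq1, fp1, fq1, hs1⟩ := hw x₁ hx₁
    obtain ⟨p2, hp2, q2, hq2, fp2, fq2, hs2⟩ := hw x₂ hx₂
    have hpf : f p1 < f p2 := by rw [fp1, fp2]; exact hlt
    have hqf : f q1 < f q2 := by rw [fq1, fq2]; exact hlt
    have hmin : min (dist p1 p2) (dist q1 q2) ≤ C * Real.sqrt (dist x₁ x₂) := by
      rcases o₁ with ⟨k1, o₁⟩ | ⟨k1, o₁⟩ <;> rcases o₂ with ⟨k2, o₂⟩ | ⟨k2, o₂⟩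
      · exact geo_main hL hh (hΓ₁' ▸ hp1) (hΓ₁' ▸ hp2) (hΓ₂' ▸ hq1) (hΓ₂' ▸ hq2)
          (o₁ _ hp1 _ hp2 hpf) (o₂ _ hq1 _ hq2 hqf) hs1 hs2
      · exact absurd k1 k2.not_gt
      · exact absurd k1 k2.not_gt
      · rw [dist_comm p1, dist_comm q1, dist_comm x₁]
        exact geo_main hL hh (hΓ₁' ▸ hp2) (hΓ₁' ▸ hp1) (hΓ₂' ▸ hq2) (hΓ₂' ▸ hq1)
          (o₁ _ hp1 _ hp2 hpf) (o₂ _ hq1 _ hq2 hqf) hs2 hs1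
    have hd0 : 0 ≤ dist x₁ x₂ := dist_nonneg
    rcases min_le_iff.1 hmin with hle | hle
    · rw [← fp1, ← fp2]
      exact (hfω p1 (Or.inl hp1) p2 (Or.inl hp2)).trans (hωm (by linarith))
    · rw [← fq1, ← fq2]
      exact (hfω q1 (Or.inr hq1) q2 (Or.inr hq2)).trans (hωm (by linarith))
  have main' : ∀ x₁ ∈ Ω, ∀ x₂ ∈ Ω,
      |w x₁ - w x₂| ≤ ω (1 * dist x₁ x₂ + C * Real.sqrt (dist x₁ x₂)) := by
    intro x₁ hx₁ x₂ hx₂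
    rcases lt_trichotomy (w x₁) (w x₂) with hlt | heq | hgt
    · exact main x₁ hx₁ x₂ hx₂ hlt
    · rw [heq, sub_self, abs_zero, ← hω0]
      exact hωm (by positivity)
    · rw [abs_sub_comm, dist_comm]
      exact main x₂ hx₂ x₁ hx₁ hgt
  refine ⟨main', ?_⟩
  intro x hx
  have hlim : Tendsto (fun y => ω (1 * dist y x + C * Real.sqrt (dist y x))) (𝓝[Ω] x) (𝓝 0) := by
    have hin : Tendsto (fun y : E2 => 1 * dist y x + C * Real.sqrt (dist y x)) (𝓝[Ω] x) (𝓝 0) := by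
      have : Continuous (fun y : E2 => 1 * dist y x + C * Real.sqrt (dist y x)) := by fun_prop
      have h2 := this.tendsto x
      simp only [dist_self, Real.sqrt_zero, mul_zero, add_zero] at h2
      exact h2.mono_left nhdsWithin_le_nhds
    have h3 : Tendsto ω (𝓝 0) (𝓝 0) := by
      have := hωc.tendsto
      rwa [hω0] at this
    exact h3.comp hin
  rw [ContinuousWithinAt, tendsto_iff_dist_tendsto_zero]
  refine squeeze_zero' (Eventually.of_forall fun _ => dist_nonneg) ?_ hlim
  filter_upwards [self_mem_nhdsWithin] with y hy
  rw [Real.dist_eq]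
  exact main' y hy x hx

end
end
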